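/- (Proposition 5, total reinforcement paradox probability under IAC, complete ballots.) The IAC probability, over complete-ballot profiles with total 1, of the event that some candidate W demonstrates a reinforcement paradox (i.e., there exists a candidate W and a partition p = p1 + p2 into two profiles with nonnegative entries such that W wins strictly under IRV in both p1 and p2 but W does not win strictly in p) equals 191/768. -/

import Mathlib

/-- A three-candidate complete-ballot profile: numbers of ballots with rankings
A≻B≻C, A≻C≻B, B≻A≻C, B≻C≻A, C≻A≻B, C≻B≻A respectively. -/
structure Profile where
  x1 : ℝ
  x2 : ℝ
  y1 : ℝ
  y2 : ℝ
  z1 : ℝ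
  z2 : ℝ

namespace Profile

def nonneg (p : Profile) : Prop :=
  0 ≤ p.x1 ∧ 0 ≤ p.x2 ∧ 0 ≤ p.y1 ∧ 0 ≤ p.y2 ∧ 0 ≤ p.z1 ∧ 0 ≤ p.z2

instance : Add Profile :=
  ⟨fun p q => ⟨p.x1 + q.x1, p.x2 + q.x2, p.y1 + q.y1, p.y2 + q.y2, p.z1 + q.z1, p.z2 + q.z2⟩⟩

/-- First-place total of candidate A. -/
def X (p : Profile) : ℝ := p.x1 + p.x2
/-- First-place total of candidate B. -/
def Y (p : Profile) : ℝ := p.y1 + p.y2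
/-- First-place total of candidate C. -/
def Z (p : Profile) : ℝ := p.z1 + p.z2
/-- Total vote. -/
def V (p : Profile) : ℝ := p.X + p.Y + p.Z

end Profile

inductive Cand | A | B | C

/-- Candidate `W` wins strictly under IRV in profile `p`. -/
def wins : Cand → Profile → Prop
  | Cand.A, p => p.X > p.Y + p.Z ∨
      (p.Z < p.X ∧ p.Z < p.Y ∧ p.X + p.z1 > p.Y + p.z2) ∨
      (p.Y < p.X ∧ p.Y < p.Z ∧ p.X + p.y1 > p.Z + p.y2)
  | Cand.B, p => p.Y > p.X + p.Z ∨
      (p.Z < p.Y ∧ p.Z < p.X ∧ p.Y + p.z2 > p.X + p.z1) ∨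
      (p.X < p.Y ∧ p.X < p.Z ∧ p.Y + p.x1 > p.Z + p.x2)
  | Cand.C, p => p.Z > p.X + p.Y ∨
      (p.X < p.Z ∧ p.X < p.Y ∧ p.Z + p.x2 > p.Y + p.x1) ∨
      (p.Y < p.Z ∧ p.Y < p.X ∧ p.Z + p.y2 > p.X + p.y1)

/-- Profile `p` demonstrates a reinforcement paradox for candidate `W`: there is a
partition `p = p1 + p2` into profiles with nonnegative entries such that `W` wins
strictly in both `p1` and `p2` but `W` does not win strictly in `p`. -/
def paradox (W : Cand) (p : Profile) : Prop :=
  ∃ p1 p2 : Profile, p1.nonneg ∧ p2.nonneg ∧ p1 + p2 = p ∧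
    wins W p1 ∧ wins W p2 ∧ ¬ wins W p

/-- The simplex of complete-ballot profiles with total 1, parameterized by the
first five coordinates (X1, X2, Y1, Y2, Z1). -/
def T : Set (Fin 5 → ℝ) :=
  {v | (∀ i, 0 ≤ v i) ∧ v 0 + v 1 + v 2 + v 3 + v 4 ≤ 1}

/-- The profile with total 1 associated to a point of `T`, with
`Z2 = 1 - (X1 + X2 + Y1 + Y2 + Z1)`. -/
noncomputable def profOf (v : Fin 5 → ℝ) : Profile :=
  ⟨v 0, v 1, v 2, v 3, v 4, 1 - (v 0 + v 1 + v 2 + v 3 + v 4)⟩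

/-- First-place total of a candidate. -/
def fp : Cand → Profile → ℝ
  | Cand.A, p => p.X
  | Cand.B, p => p.Y
  | Cand.C, p => p.Z

/-- Candidate `W`'s first-place total is strictly smallest among the three. -/
def strictlySmallest (W : Cand) (p : Profile) : Prop :=
  ∀ W' : Cand, W' ≠ W → fp W p < fp W' p

/-!
Relabelling the candidates preserves volume, and ties have measure zero, so the volume is six times
that of the paradoxical profiles in which `C` is eliminated first and `B` then beats `A`. There `B`
wins, hence a paradox is one for `A` or for `C`. In each part of a partition, that candidate
survives the elimination of one of the other two; adding the inequalities this imposes on the two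
parts gives necessary linear conditions on the whole profile, and their strict versions are
sufficient by an explicit partition. Let `X = 1/2 - a`, `Y = 1/2 - b`, and let `1/2 - w` be the
votes of `A` in the runoff. The conditions are `w < min b y1` for `A`, and `1/4 < a + b`,
`x1 < 2b`, `y1 < 2a`, `x1 + y1 < 1/2` for `C`. Up to a null set they define a disjoint union of six
polyhedra whose volumes are iterated integrals of polynomials; the volumes sum to `191/552960`.
-/

open MeasureTheory Set
open scoped Matrix

section IteratedIntegrals

variable {n : ℕ} {l u r : ℝ} {R : ℝ → Set (Fin n → ℝ)}

/-- The region fibred over the interval `(l, u)` of its first coordinate, with fibre `R x`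
in the remaining coordinates. -/
def nest (l u : ℝ) (R : ℝ → Set (Fin n → ℝ)) : Set (Fin (n + 1) → ℝ) :=
  {w | (l < Matrix.vecHead w ∧ Matrix.vecHead w < u) ∧ Matrix.vecTail w ∈ R (Matrix.vecHead w)}

/-- `S` has volume `r`, a real number, provided it is measurable. Keeping measurability as a
premise lets the fibres of an iterated region inherit it from the region itself. -/
def HasVolume (S : Set (Fin n → ℝ)) (r : ℝ) : Prop :=
  0 ≤ r ∧ (MeasurableSet S → volume S = ENNReal.ofReal r)

theorem hasVolume_univ : HasVolume (univ : Set (Fin 0 → ℝ)) 1 :=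
  ⟨zero_le_one, fun _ ↦ by simp [volume_pi]⟩

theorem measurable_vecCons (x : ℝ) :
    Measurable (Matrix.vecCons x : (Fin n → ℝ) → Fin (n + 1) → ℝ) := by
  refine measurable_pi_lambda _ (Fin.cases ?_ fun i ↦ ?_)
  · exact measurable_const
  · exact measurable_pi_apply i

theorem preimage_vecCons_nest {x : ℝ} (hx : x ∈ Ioo l u) :
    Matrix.vecCons x ⁻¹' nest l u R = R x := by
  ext w
  simp [nest, hx.1, hx.2]

theorem preimage_vecCons_nest_of_notMem {x : ℝ} (hx : x ∉ Ioo l u) :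
    Matrix.vecCons x ⁻¹' nest l u R = ∅ :=
  eq_empty_of_forall_notMem fun _ hw ↦ hx hw.1

theorem volume_eq_lintegral_vecCons {S : Set (Fin (n + 1) → ℝ)} (hS : MeasurableSet S) :
    volume S = ∫⁻ x, volume (Matrix.vecCons x ⁻¹' S) := by
  have hmp := (volume_preserving_piFinSuccAbove (fun _ : Fin (n + 1) ↦ ℝ) 0).symm
  rw [← hmp.measure_preimage hS.nullMeasurableSet, Measure.volume_eq_prod,
    Measure.prod_apply (hmp.measurable hS)]
  simp only [← preimage_comp]
  congr! with x
  exact funext fun w ↦ Fin.insertNth_zero' x w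

theorem volume_nest (hS : MeasurableSet (nest l u R)) :
    volume (nest l u R) = ∫⁻ x in Ioo l u, volume (R x) := by
  rw [volume_eq_lintegral_vecCons hS, ← lintegral_indicator measurableSet_Ioo]
  congr with x
  by_cases hx : x ∈ Ioo l u
  · rw [indicator_of_mem hx, preimage_vecCons_nest hx]
  · rw [indicator_of_notMem hx, preimage_vecCons_nest_of_notMem hx, measure_empty]

theorem hasVolume_nest {V : ℝ → ℝ} (hlu : l ≤ u) (hV : Continuous V)
    (hR : ∀ x ∈ Ioo l u, HasVolume (R x) (V x)) :
    HasVolume (nest l u R) (∫ x in l..u, V x) := by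
  rw [intervalIntegral.integral_of_le hlu, integral_Ioc_eq_integral_Ioo]
  refine ⟨setIntegral_nonneg measurableSet_Ioo fun x hx ↦ (hR x hx).1, fun hS ↦ ?_⟩
  have hfibre : ∀ x ∈ Ioo l u, volume (R x) = ENNReal.ofReal (V x) := fun x hx ↦
    (hR x hx).2 (preimage_vecCons_nest (R := R) hx ▸ measurable_vecCons x hS)
  rw [volume_nest hS, setLIntegral_congr_fun measurableSet_Ioo hfibre,
    ofReal_integral_eq_lintegral_ofReal (hV.integrableOn_Icc.mono_set Ioo_subset_Icc_self)]
  exact ae_restrict_of_forall_mem measurableSet_Ioo fun x hx ↦ (hR x hx).1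

theorem integral_sum_mul_pow {k : ℕ} (c : Fin k → ℝ) (l u : ℝ) :
    ∫ x in l..u, ∑ i, c i * x ^ (i : ℕ) =
      ∑ i, c i * ((u ^ (i + 1 : ℕ) - l ^ (i + 1 : ℕ)) / ((i : ℕ) + 1)) := by
  rw [intervalIntegral.integral_finsetSum fun i _ ↦
    (Continuous.intervalIntegrable (by fun_prop) _ _)]
  simp only [intervalIntegral.integral_const_mul, integral_pow]

theorem hasVolume_nest_poly {k : ℕ} (c : Fin k → ℝ) {V : ℝ → ℝ} (hlu : l ≤ u)
    (hV : ∀ x, V x = ∑ i, c i * x ^ (i : ℕ))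
    (hr : r = ∑ i, c i * ((u ^ (i + 1 : ℕ) - l ^ (i + 1 : ℕ)) / ((i : ℕ) + 1)))
    (hR : ∀ x ∈ Ioo l u, HasVolume (R x) (V x)) : HasVolume (nest l u R) r := by
  obtain rfl : V = fun x ↦ ∑ i, c i * x ^ (i : ℕ) := funext hV
  rw [hr, ← integral_sum_mul_pow]
  exact hasVolume_nest hlu (by fun_prop) hR

end IteratedIntegrals

section Cells

variable {α β γ : ℝ}

theorem hasVolume_interval (h : α ≤ β) :
    HasVolume (nest α β fun _ ↦ (univ : Set (Fin 0 → ℝ))) (β - α) :=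
  hasVolume_nest_poly ![1] h (V := fun _ ↦ 1) (by simp) (by simp) fun _ _ ↦ hasVolume_univ

theorem hasVolume_nest_const {n : ℕ} {S : Set (Fin n → ℝ)} {r : ℝ} (h : α ≤ β)
    (hS : HasVolume S r) : HasVolume (nest α β fun _ ↦ S) ((β - α) * r) :=
  hasVolume_nest_poly ![r] h (V := fun _ ↦ r) (by simp) (by simp [mul_comm]) fun _ _ ↦ hS

theorem hasVolume_triangle_prod (hα : 0 ≤ α) (hγ : 0 ≤ γ) :
    HasVolume (nest 0 α fun w ↦ nest 0 w fun _ ↦ nest 0 γ fun _ ↦ (univ : Set (Fin 0 → ℝ)))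
      (γ * α ^ 2 / 2) := by
  refine hasVolume_nest_poly ![0, γ] hα (V := fun w ↦ (w - 0) * (γ - 0)) ?_ ?_ fun w hw ↦ ?_
  · intro w; simp [Fin.sum_univ_succ]; ring
  · simp [Fin.sum_univ_succ]; ring
  · exact hasVolume_nest_const hw.1.le (hasVolume_interval hγ)

theorem hasVolume_trapezoid_prod (hα : 0 ≤ α) (hαβ : α ≤ β) (hγ : 0 ≤ γ) :
    HasVolume (nest 0 α fun w ↦ nest w β fun _ ↦ nest 0 γ fun _ ↦ (univ : Set (Fin 0 → ℝ)))
      (γ * (α * β - α ^ 2 / 2)) := by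
  refine hasVolume_nest_poly ![β * γ, -γ] hα (V := fun w ↦ (β - w) * (γ - 0)) ?_ ?_ fun w hw ↦ ?_
  · intro w; simp [Fin.sum_univ_succ]; ring
  · simp [Fin.sum_univ_succ]; ring
  · exact hasVolume_nest_const (hw.2.le.trans hαβ) (hasVolume_interval hγ)

/-- The regions of paradoxical deficits, given by nested intervals of values for the successive
coordinates. These are `(a, b, w, y1, x1)` in cell `0`, `(b, a, w, y1, x1)` in cell `1`,
`(Z, a, w, y1, x1)` in cell `2` and `(Z, b, w, y1, x1)` in cells `3`, `4` and `5`, where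
`Z = a + b`; see `ofDeficits` and `region` for their meaning. -/
def cell : Fin 6 → Set (Fin 5 → ℝ)
  | 0 => nest 0 (1 / 6) fun a ↦ nest a (1 / 4 - a / 2) fun b ↦
      nest 0 a fun w ↦ nest w (1 / 2 - b) fun _ ↦ nest 0 (1 / 2 - a) fun _ ↦ univ
  | 1 => nest 0 (1 / 6) fun b ↦ nest b (1 / 4 - b / 2) fun a ↦
      nest 0 b fun w ↦ nest w (1 / 2 - b) fun _ ↦ nest 0 (1 / 2 - a) fun _ ↦ univ
  | 2 => nest (1 / 4) (1 / 3) fun Z ↦ nest (2 * Z - 1 / 2) (Z / 2) fun a ↦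
      nest 0 a fun w ↦ nest 0 w fun _ ↦ nest 0 (2 * (Z - a)) fun _ ↦ univ
  | 3 => nest (1 / 4) (1 / 3) fun Z ↦ nest (2 * Z - 1 / 2) (Z / 2) fun b ↦
      nest 0 b fun w ↦ nest 0 w fun _ ↦ nest 0 (2 * b) fun _ ↦ univ
  | 4 => nest (1 / 4) (1 / 3) fun Z ↦ nest (2 * Z - 1 / 2) (Z / 2) fun b ↦
      nest b (Z - b) fun _ ↦ nest 0 (1 / 2 - 2 * b) fun _ ↦ nest 0 (2 * b) fun _ ↦ univ
  | 5 => nest (1 / 4) (1 / 3) fun Z ↦ nest (2 * Z - 1 / 2) (Z / 2) fun b ↦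
      nest b (Z - b) fun _ ↦ nest (1 / 2 - 2 * b) (2 * (Z - b)) fun y ↦
        nest 0 (1 / 2 - y) fun _ ↦ univ

theorem measurableSet_cell (i : Fin 6) : MeasurableSet (cell i) := by
  fin_cases i <;>
    simp only [cell, nest, Matrix.vecHead, Matrix.vecTail, mem_univ, and_true, mem_ofPred_eq] <;>
    measurability

theorem hasVolume_cell_zero : HasVolume (cell 0) (7 / 46080) := by
  rw [cell]
  -- Here and below, the coefficients are those of the volume of a fibre, integrated over its inner
  -- coordinates and expanded in powers of the outermost remaining one.
  refine hasVolume_nest_poly ![0, 3 / 64, -15 / 32, 21 / 16, -9 / 8] (by norm_num) (fun _ ↦ rfl)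
    (by simp [Fin.sum_univ_succ]; norm_num) fun a ⟨ha₁, ha₂⟩ ↦ ?_
  refine hasVolume_nest_poly ![a / 4 - 3 / 4 * a ^ 2 + a ^ 3 / 2, -(a / 2) + a ^ 2] (by linarith)
    (fun b ↦ ?_) (by simp [Fin.sum_univ_succ]; ring)
    fun b hb ↦ hasVolume_trapezoid_prod ha₁.le (by linarith [hb.2]) (by linarith)
  simp [Fin.sum_univ_succ]; ring

theorem hasVolume_cell_one : HasVolume (cell 1) (1 / 6480) := by
  rw [cell]
  refine hasVolume_nest_poly ![0, 3 / 64, -29 / 64, 9 / 8, -9 / 16] (by norm_num) (fun _ ↦ rfl)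
    (by simp [Fin.sum_univ_succ]; norm_num) fun b ⟨hb₁, _⟩ ↦ ?_
  refine hasVolume_nest_poly ![b / 4 - 3 / 4 * b ^ 2, -(b / 2) + 3 / 2 * b ^ 2] (by linarith)
    (fun a ↦ ?_) (by simp [Fin.sum_univ_succ]; ring)
    fun a ha ↦ hasVolume_trapezoid_prod hb₁.le (by linarith) (by linarith [ha.2])
  simp [Fin.sum_univ_succ]; ring

theorem hasVolume_cell_two : HasVolume (cell 2) (83 / 8847360) := by
  rw [cell]
  refine hasVolume_nest_poly ![1 / 64, -5 / 24, 1, -2, 87 / 64] (by norm_num) (fun _ ↦ rfl)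
    (by simp [Fin.sum_univ_succ]; norm_num) fun Z ⟨hZ₁, hZ₂⟩ ↦ ?_
  refine hasVolume_nest_poly ![0, 0, Z, -1] (by linarith)
    (fun a ↦ ?_) (by simp [Fin.sum_univ_succ]; ring)
    fun a ⟨ha₁, ha₂⟩ ↦ hasVolume_triangle_prod (by linarith) (by linarith)
  simp [Fin.sum_univ_succ]; ring

theorem hasVolume_cell_three : HasVolume (cell 3) (35 / 5308416) := by
  rw [cell]
  refine hasVolume_nest_poly ![-1 / 64, 1 / 4, -3 / 2, 4, -255 / 64] (by norm_num) (fun _ ↦ rfl)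
    (by simp [Fin.sum_univ_succ]; norm_num) fun Z ⟨hZ₁, hZ₂⟩ ↦ ?_
  refine hasVolume_nest_poly ![0, 0, 0, 1] (by linarith)
    (fun b ↦ ?_) (by simp [Fin.sum_univ_succ]; ring)
    fun b ⟨hb₁, _⟩ ↦ hasVolume_triangle_prod (by linarith) (by linarith)
  simp [Fin.sum_univ_succ]; ring

theorem hasVolume_cell_four : HasVolume (cell 4) (17 / 829440) := by
  rw [cell]
  refine hasVolume_nest_poly ![-5 / 24, 65 / 24, -13, 219 / 8, -171 / 8] (by norm_num)
    (fun _ ↦ rfl) (by simp [Fin.sum_univ_succ]; norm_num) fun Z ⟨hZ₁, hZ₂⟩ ↦ ?_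
  refine hasVolume_nest_poly ![0, Z, -4 * Z - 2, 8] (by linarith)
    (fun b ↦ ?_) (by simp [Fin.sum_univ_succ]; ring)
    fun b ⟨hb₁, hb₂⟩ ↦ hasVolume_nest_const (by linarith) <|
      hasVolume_nest_const (by linarith) (hasVolume_interval (by linarith))
  simp [Fin.sum_univ_succ]; ring

theorem hasVolume_cell_five : HasVolume (cell 5) (1 / 368640) := by
  rw [cell]
  refine hasVolume_nest_poly ![5 / 96, -37 / 48, 135 / 32, -81 / 8, 9] (by norm_num)
    (fun _ ↦ rfl) (by simp [Fin.sum_univ_succ]; norm_num) fun Z ⟨hZ₁, hZ₂⟩ ↦ ?_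
  refine hasVolume_nest_poly ![-(Z / 8) + Z ^ 2 - 2 * Z ^ 3, 1 / 4 - 3 * Z + 8 * Z ^ 2, 2 - 8 * Z]
    (by linarith) (fun b ↦ ?_) (by simp [Fin.sum_univ_succ]; ring)
    fun b ⟨hb₁, hb₂⟩ ↦ hasVolume_nest_const (by linarith) <|
      hasVolume_nest_poly ![1 / 2, -1] (by linarith) (fun y ↦ ?_) rfl
        fun y ⟨hy₁, hy₂⟩ ↦ hasVolume_interval (by linarith)
  all_goals simp [Fin.sum_univ_succ]; ring

/-- The volumes of the cells. -/
noncomputable def cellVolume : Fin 6 → ℝ :=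
  ![7 / 46080, 1 / 6480, 83 / 8847360, 35 / 5308416, 17 / 829440, 1 / 368640]

theorem hasVolume_cell (i : Fin 6) : HasVolume (cell i) (cellVolume i) := by
  fin_cases i
  exacts [hasVolume_cell_zero, hasVolume_cell_one, hasVolume_cell_two, hasVolume_cell_three,
    hasVolume_cell_four, hasVolume_cell_five]

theorem sum_cellVolume : ∑ i, cellVolume i = 191 / 552960 := by
  simp only [cellVolume, Fin.sum_univ_six, Matrix.cons_val]
  norm_num

end Cells

section AffineMaps

variable {ι : Type*} [Fintype ι]

theorem ae_dotProduct_ne {a : ι → ℝ} (ha : a ≠ 0) (c : ℝ) : ∀ᵐ v : ι → ℝ, a ⬝ᵥ v ≠ c := by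
  obtain ⟨i, hi⟩ := Function.ne_iff.mp ha
  classical
  have hsurj : Function.Surjective (dotProductBilin ℝ ℝ a) :=
    LinearMap.surjective_of_ne_zero fun h ↦ hi <| by
      simpa using LinearMap.congr_fun h (Pi.single i 1)
  exact (ae_comp_linearMap_mem_iff (dotProductBilin ℝ ℝ a) volume volume hsurj
    (measurableSet_singleton c).compl).mpr (by simp [ae_iff])

theorem measurePreserving_mulVec_add [DecidableEq ι] {M : Matrix ι ι ℝ} (hM : |M.det| = 1)
    (t : ι → ℝ) : MeasurePreserving fun v ↦ M *ᵥ v + t := by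
  have hlin : MeasurePreserving (Matrix.toLin' M) := by
    refine ⟨(Matrix.toLin' M).continuous_of_finiteDimensional.measurable, ?_⟩
    rw [Real.map_matrix_volume_pi_eq_smul_volume_pi (abs_pos.mp (hM ▸ one_pos)), abs_inv, hM]
    simp
  exact (measurePreserving_add_right volume t).comp hlin

theorem iterate_mulVec_add [DecidableEq ι] (M : Matrix ι ι ℝ) (t : ι → ℝ) (k : ℕ) (v : ι → ℝ) :
    (fun v ↦ M *ᵥ v + t)^[k] v = M ^ k *ᵥ v + (fun v ↦ M *ᵥ v + t)^[k] 0 := by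
  induction k with
  | zero => simp
  | succ k ih => simp [Function.iterate_succ_apply', ih, Matrix.mulVec_add, pow_succ', add_assoc]

theorem measurePreserving_mulVec_add_of_iterate_eq_id {M : Matrix ι ι ℝ} {t : ι → ℝ} {k : ℕ}
    (hk : k ≠ 0) (h : (fun v ↦ M *ᵥ v + t)^[k] = id) :
    MeasurePreserving fun v ↦ M *ᵥ v + t := by
  classical
  refine measurePreserving_mulVec_add ?_ t
  have hM : M ^ k = 1 := Matrix.mulVec_injective <| funext fun v ↦ by
    simpa [h] using (iterate_mulVec_add M t k v).symm
  rw [← pow_eq_one_iff_of_nonneg (abs_nonneg _) hk, ← abs_pow, ← Matrix.det_pow, hM,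
    Matrix.det_one, abs_one]

end AffineMaps

section Relabelling

attribute [ext] Profile

instance : DecidableEq Cand := fun a b ↦ by
  cases a <;> cases b <;> first | exact isTrue rfl | exact isFalse nofun

instance : Fintype Cand := ⟨{.A, .B, .C}, fun a ↦ by cases a <;> decide⟩

namespace Profile

/-- The number of ballots with `a` first and `b` second; by convention `0` if `a = b`. -/
def count (p : Profile) : Cand → Cand → ℝ
  | .A, .B => p.x1
  | .A, .C => p.x2
  | .B, .A => p.y1
  | .B, .C => p.y2
  | .C, .A => p.z1
  | .C, .B => p.z2
  | _, _ => 0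

variable {p : Profile} {L U W a b : Cand} (σ τ : Equiv.Perm Cand)

theorem count_self (p : Profile) (a : Cand) : p.count a a = 0 := by
  cases a <;> rfl

theorem count_add (p q : Profile) (a b : Cand) :
    (p + q).count a b = p.count a b + q.count a b := by
  cases a <;> cases b <;> first | rfl | exact (add_zero 0).symm

theorem count_injective : Function.Injective count := fun p q h ↦ by
  have h a b : p.count a b = q.count a b := congr_fun₂ h a b
  ext
  exacts [h .A .B, h .A .C, h .B .A, h .B .C, h .C .A, h .C .B]

theorem nonneg_iff_count : p.nonneg ↔ ∀ a b, 0 ≤ p.count a b := by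
  refine ⟨fun ⟨_, _, _, _, _, _⟩ a b ↦ ?_, fun h ↦
    ⟨h .A .B, h .A .C, h .B .A, h .B .C, h .C .A, h .C .B⟩⟩
  cases a <;> cases b <;> first | assumption | exact le_rfl

theorem sum_cand (f : Cand → ℝ) : ∑ a, f a = f .A + f .B + f .C := by
  simp [Finset.univ, Fintype.elems, add_assoc]

theorem exists_cand {q : Cand → Prop} : (∃ a, q a) ↔ q .A ∨ q .B ∨ q .C :=
  ⟨fun ⟨a, h⟩ ↦ by cases a <;> simp [h], by rintro (h | h | h) <;> exact ⟨_, h⟩⟩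

theorem fp_eq_sum_count (a : Cand) (p : Profile) : fp a p = ∑ b, p.count a b := by
  cases a <;> simp [sum_cand, count, fp, X, Y, Z]

theorem V_eq_sum_fp (p : Profile) : p.V = ∑ a, fp a p :=
  (sum_cand fun a ↦ fp a p).symm

/-- The runoff in `p` eliminates `L`, and `W` then beats `U`. -/
def RunoffWin (p : Profile) (L U W : Cand) : Prop :=
  fp L p < fp W p ∧ fp L p < fp U p ∧ fp U p + p.count L U < fp W p + p.count L W

theorem wins_iff : wins W p ↔ p.V < 2 * fp W p ∨ ∃ L U, p.RunoffWin L U W := by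
  simp only [exists_cand]
  cases W <;> simp only [wins, RunoffWin, fp, V, count] <;> grind

theorem RunoffWin.unique (h : p.RunoffWin .C .A .B) (h' : p.RunoffWin L U W) :
    L = .C ∧ U = .A ∧ W = .B := by
  cases L <;> cases U <;> cases W <;> simp_all [RunoffWin] <;> linarith

/-- The profile obtained from `p` by giving the name `a` to candidate `σ a`. -/
def relabel (p : Profile) : Profile where
  x1 := p.count (σ .A) (σ .B)
  x2 := p.count (σ .A) (σ .C)
  y1 := p.count (σ .B) (σ .A)
  y2 := p.count (σ .B) (σ .C)
  z1 := p.count (σ .C) (σ .A)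
  z2 := p.count (σ .C) (σ .B)

theorem count_relabel (p : Profile) (a b : Cand) :
    (p.relabel σ).count a b = p.count (σ a) (σ b) := by
  cases a <;> cases b <;> first | rfl | exact (count_self ..).symm

theorem relabel_one (p : Profile) : p.relabel 1 = p :=
  count_injective <| funext₂ fun a b ↦ count_relabel 1 p a b

theorem relabel_relabel (p : Profile) : (p.relabel σ).relabel τ = p.relabel (σ * τ) :=
  count_injective <| funext₂ fun a b ↦ by simp [count_relabel]

theorem relabel_add (p q : Profile) : (p + q).relabel σ = p.relabel σ + q.relabel σ :=
  count_injective <| funext₂ fun a b ↦ by simp [count_relabel, count_add]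

theorem nonneg.relabel (hp : p.nonneg) : (p.relabel σ).nonneg := by
  rw [nonneg_iff_count] at hp ⊢
  exact fun a b ↦ count_relabel σ p a b ▸ hp _ _

theorem fp_relabel (a : Cand) (p : Profile) : fp a (p.relabel σ) = fp (σ a) p := by
  simp only [fp_eq_sum_count, count_relabel]
  exact Equiv.sum_comp σ _

theorem V_relabel (p : Profile) : (p.relabel σ).V = p.V := by
  simp only [V_eq_sum_fp, fp_relabel]
  exact Equiv.sum_comp σ (fp · p)

theorem runoffWin_relabel : (p.relabel σ).RunoffWin L U W ↔ p.RunoffWin (σ L) (σ U) (σ W) := by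
  simp only [RunoffWin, fp_relabel, count_relabel]

theorem exists_runoffWin_of_lt (ha : fp L p < fp a p) (hb : fp L p < fp b p)
    (hab : fp a p + p.count L a ≠ fp b p + p.count L b) : ∃ L U W, p.RunoffWin L U W :=
  hab.lt_or_gt.elim (fun h ↦ ⟨L, a, b, hb, ha, h⟩) fun h ↦ ⟨L, b, a, ha, hb, h⟩

theorem exists_runoffWin (hAB : fp .A p ≠ fp .B p) (hAC : fp .A p ≠ fp .C p)
    (hBC : fp .B p ≠ fp .C p) (elimA : fp .B p + p.count .A .B ≠ fp .C p + p.count .A .C)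
    (elimB : fp .A p + p.count .B .A ≠ fp .C p + p.count .B .C)
    (elimC : fp .A p + p.count .C .A ≠ fp .B p + p.count .C .B) : ∃ L U W, p.RunoffWin L U W := by
  rcases hAB.lt_or_gt with hlt | hlt
  · rcases hAC.lt_or_gt with h | h
    · exact exists_runoffWin_of_lt hlt h elimA
    · exact exists_runoffWin_of_lt h (h.trans hlt) elimC
  · rcases hBC.lt_or_gt with h | h
    · exact exists_runoffWin_of_lt hlt h elimB
    · exact exists_runoffWin_of_lt (h.trans hlt) h elimC

theorem RunoffWin.exists_relabel (h : p.RunoffWin L U W) :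
    ∃ σ : Equiv.Perm Cand, (p.relabel σ).RunoffWin .C .A .B := by
  let f : Cand → Cand
    | .A => U
    | .B => W
    | .C => L
  have hf : Function.Injective f := by
    obtain ⟨hLW, hLU, hUW⟩ := h
    intro a b hab
    cases a <;> cases b <;> first | rfl | (simp only [f] at hab; subst hab; linarith)
  exact ⟨.ofBijective f (Finite.injective_iff_bijective.mp hf), (runoffWin_relabel _).mpr h⟩

theorem RunoffWin.relabel_injective {σ τ : Equiv.Perm Cand} (hσ : (p.relabel σ).RunoffWin .C .A .B)
    (hτ : (p.relabel τ).RunoffWin .C .A .B) : σ = τ := by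
  have hστ : p.relabel τ = (p.relabel σ).relabel (σ⁻¹ * τ) := by
    rw [relabel_relabel, mul_inv_cancel_left]
  rw [hστ, runoffWin_relabel] at hτ
  obtain ⟨hC, hA, hB⟩ := hσ.unique hτ
  refine inv_mul_eq_one.mp (Equiv.ext fun a ↦ ?_)
  cases a <;> assumption

theorem wins_relabel : wins W (p.relabel σ) ↔ wins (σ W) p := by
  simp only [wins_iff, V_relabel, fp_relabel, runoffWin_relabel]
  exact or_congr_right (σ.surjective.exists₂ (p := fun L U ↦ p.RunoffWin L U (σ W))).symm

theorem paradox_relabel_of_paradox (h : paradox (σ W) p) : paradox W (p.relabel σ) := by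
  obtain ⟨p₁, p₂, hp₁, hp₂, rfl, hW₁, hW₂, hW⟩ := h
  exact ⟨p₁.relabel σ, p₂.relabel σ, hp₁.relabel σ, hp₂.relabel σ, (relabel_add σ p₁ p₂).symm,
    (wins_relabel σ).mpr hW₁, (wins_relabel σ).mpr hW₂, mt (wins_relabel σ).mp hW⟩

theorem paradox_relabel : paradox W (p.relabel σ) ↔ paradox (σ W) p := by
  refine ⟨fun h ↦ ?_, paradox_relabel_of_paradox σ⟩
  simpa [relabel_relabel, relabel_one] using
    paradox_relabel_of_paradox (p := p.relabel σ) (W := σ W) σ⁻¹ (by simpa using h)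

theorem exists_paradox_relabel : (∃ W, paradox W (p.relabel σ)) ↔ ∃ W, paradox W p := by
  simp only [paradox_relabel]
  exact (σ.surjective.exists (p := fun W ↦ paradox W p)).symm

end Profile

end Relabelling

section Characterisation

theorem paradox.nonneg {W : Cand} {p : Profile} (h : paradox W p) : p.nonneg := by
  obtain ⟨p₁, p₂, hp₁, hp₂, rfl, -⟩ := h
  simp only [Profile.nonneg_iff_count, Profile.count_add] at *
  exact fun a b ↦ add_nonneg (hp₁ a b) (hp₂ a b)

namespace Profile

variable {p : Profile} {W : Cand}

theorem x1_add (p q : Profile) : (p + q).x1 = p.x1 + q.x1 := rfl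
theorem x2_add (p q : Profile) : (p + q).x2 = p.x2 + q.x2 := rfl
theorem y1_add (p q : Profile) : (p + q).y1 = p.y1 + q.y1 := rfl
theorem y2_add (p q : Profile) : (p + q).y2 = p.y2 + q.y2 := rfl
theorem z1_add (p q : Profile) : (p + q).z1 = p.z1 + q.z1 := rfl
theorem z2_add (p q : Profile) : (p + q).z2 = p.z2 + q.z2 := rfl

/-- Up to ties for elimination, the runoff in `p` eliminates `L`, and `W` then beats `U`. -/
def WeakRunoffWin (p : Profile) (L U W : Cand) : Prop :=
  fp L p ≤ fp W p ∧ fp L p ≤ fp U p ∧ fp U p + p.count L U < fp W p + p.count L W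

theorem weakRunoffWin_of_wins_A (hp : p.nonneg) (h : wins .A p) :
    p.WeakRunoffWin .C .B .A ∨ p.WeakRunoffWin .B .C .A := by
  obtain ⟨_, _, _, _, _, _⟩ := hp
  simp only [wins, WeakRunoffWin, fp, X, Y, Z, count] at *
  grind

theorem weakRunoffWin_of_wins_C (hp : p.nonneg) (h : wins .C p) :
    p.WeakRunoffWin .A .B .C ∨ p.WeakRunoffWin .B .A .C := by
  obtain ⟨_, _, _, _, _, _⟩ := hp
  simp only [wins, WeakRunoffWin, fp, X, Y, Z, count] at *
  grind

theorem le_of_paradox_A (hp : p.RunoffWin .C .A .B) (h : paradox .A p) :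
    p.Y ≤ p.X + p.z1 ∧ p.y2 + p.z2 ≤ p.X + p.y1 + p.z1 := by
  obtain ⟨p₁, p₂, hp₁, hp₂, rfl, hw₁, hw₂, -⟩ := h
  replace hw₁ := weakRunoffWin_of_wins_A hp₁ hw₁
  replace hw₂ := weakRunoffWin_of_wins_A hp₂ hw₂
  simp only [nonneg, WeakRunoffWin, RunoffWin, fp, X, Y, Z, count, x1_add, x2_add, y1_add, y2_add,
    z1_add, z2_add] at *
  rcases hw₁ with hw₁ | hw₁ <;> rcases hw₂ with hw₂ | hw₂ <;> constructor <;> linarith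

theorem le_of_paradox_C (hp : p.RunoffWin .C .A .B) (h : paradox .C p) :
    p.X + p.Y ≤ 3 * p.Z ∧ p.Y - p.Z ≤ p.x2 ∧ p.X - p.Z ≤ p.y2 ∧
      p.X + p.Y - p.Z ≤ 2 * (p.x2 + p.y2) := by
  obtain ⟨p₁, p₂, hp₁, hp₂, rfl, hw₁, hw₂, -⟩ := h
  replace hw₁ := weakRunoffWin_of_wins_C hp₁ hw₁
  replace hw₂ := weakRunoffWin_of_wins_C hp₂ hw₂
  simp only [nonneg, WeakRunoffWin, RunoffWin, fp, X, Y, Z, count, x1_add, x2_add, y1_add, y2_add,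
    z1_add, z2_add] at *
  rcases hw₁ with hw₁ | hw₁ <;> rcases hw₂ with hw₂ | hw₂ <;> refine ⟨?_, ?_, ?_, ?_⟩ <;> linarith

theorem RunoffWin.wins_iff_eq (hp : p.nonneg) (h : p.RunoffWin .C .A .B) :
    wins W p ↔ W = .B := by
  refine ⟨fun hW ↦ ?_, fun hW ↦ hW ▸ wins_iff.mpr (.inr ⟨_, _, h⟩)⟩
  rcases wins_iff.mp hW with hmaj | ⟨L, U, hrun⟩
  · cases W <;> simp only [nonneg, RunoffWin, fp, V, X, Y, Z, count] at * <;> grind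
  · exact (h.unique hrun).2.2

theorem paradox_of_runoffWin {L₁ U₁ L₂ U₂ : Cand} {p₁ p₂ : Profile} (h : ¬ wins W (p₁ + p₂))
    (hp₁ : p₁.nonneg) (hp₂ : p₂.nonneg) (h₁ : p₁.RunoffWin L₁ U₁ W) (h₂ : p₂.RunoffWin L₂ U₂ W) :
    paradox W (p₁ + p₂) :=
  ⟨p₁, p₂, hp₁, hp₂, rfl, wins_iff.mpr (.inr ⟨_, _, h₁⟩), wins_iff.mpr (.inr ⟨_, _, h₂⟩), h⟩

theorem exists_mem_Icc_add_eq {a b s : ℝ} (ha : 0 ≤ a) (hb : 0 ≤ b) (hs : 0 ≤ s)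
    (h : s ≤ a + b) : ∃ s₁ ∈ Icc 0 a, ∃ s₂ ∈ Icc 0 b, s₁ + s₂ = s := by
  rcases le_total s a with hsa | hsa
  · exact ⟨s, ⟨hs, hsa⟩, 0, ⟨le_rfl, hb⟩, add_zero s⟩
  · exact ⟨a, ⟨ha, le_rfl⟩, s - a, ⟨by linarith, by linarith⟩, by ring⟩

theorem paradox_A_of_lt (hp : p.nonneg) (h : p.RunoffWin .C .A .B) (hY : p.Y < p.X + p.z1)
    (hz : p.y2 + p.z2 < p.X + p.y1 + p.z1) : paradox .A p := by
  have hA : ¬ wins .A p := fun hw ↦ nomatch (h.wins_iff_eq hp).mp hw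
  obtain ⟨x1, x2, y1, y2, z1, z2⟩ := p
  simp only [nonneg, RunoffWin, fp, X, Y, Z, count] at hp h hY hz
  -- The second part takes `k` ballots BAC, `2k` ballots CBA and `s > k` ballots led by `A`, so that
  -- it eliminates `B` and hands the `k` ballots BAC to `A`; the first part still eliminates `C`,
  -- and is rid of `2k` transfers from `C` to `B`.
  obtain ⟨k, hgap, hk⟩ : ∃ k, y1 + y2 + z2 - x1 - x2 - z1 < 2 * k ∧ k ≤ min y1 (z2 / 2) :=
    ⟨min y1 (z2 / 2), by rw [← div_lt_iff₀' two_pos, lt_min_iff]; grind, le_rfl⟩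
  obtain ⟨s, hks, hs⟩ : ∃ s, k < s ∧
      s < min (x1 + x2 - z1 - z2 + 2 * k) (3 * k - (y1 + y2 + z2 - x1 - x2 - z1)) :=
    exists_between (lt_min (by linarith) (by linarith))
  rw [le_min_iff] at hk
  rw [lt_min_iff] at hs
  obtain ⟨s₁, ⟨hs₁, hsx₁⟩, s₂, ⟨hs₂, hsx₂⟩, rfl⟩ :=
    exists_mem_Icc_add_eq (a := x1) (b := x2) (s := s) (by linarith) (by linarith) (by linarith)
      (by linarith)
  have hsum : (⟨x1 - s₁, x2 - s₂, y1 - k, y2, z1, z2 - 2 * k⟩ + ⟨s₁, s₂, k, 0, 0, 2 * k⟩ :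
      Profile) = ⟨x1, x2, y1, y2, z1, z2⟩ := by
    ext <;> simp [x1_add, x2_add, y1_add, y2_add, z1_add, z2_add]
  rw [← hsum] at hA ⊢
  refine paradox_of_runoffWin (L₁ := .C) (U₁ := .B) (L₂ := .B) (U₂ := .C) hA ?_ ?_ ?_ ?_ <;>
    simp only [nonneg, RunoffWin, fp, X, Y, Z, count] <;> grind

theorem paradox_C_of_lt (hp : p.nonneg) (h : p.RunoffWin .C .A .B) (hz : p.X + p.Y < 3 * p.Z)
    (hY : p.Y - p.Z < p.x2) (hX : p.X - p.Z < p.y2)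
    (hXY : p.X + p.Y - p.Z < 2 * (p.x2 + p.y2)) : paradox .C p := by
  have hC : ¬ wins .C p := fun hw ↦ nomatch (h.wins_iff_eq hp).mp hw
  obtain ⟨x1, x2, y1, y2, z1, z2⟩ := p
  simp only [nonneg, RunoffWin, fp, X, Y, Z, count] at hp h hY hz hX hXY
  -- The first part eliminates `A` and gives `C` the `u` ballots ACB, the second eliminates `B` and
  -- gives `C` the `m - u` ballots BCA; `s` of the ballots led by `C` go to the first part.
  obtain ⟨m, hm₁, hm₂⟩ : ∃ m, (x1 + x2 + (y1 + y2) - (z1 + z2)) / 2 < m ∧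
      m < min (z1 + z2) (x2 + y2) :=
    exists_between (lt_min (by linarith) (by linarith))
  rw [lt_min_iff] at hm₂
  obtain ⟨u, hu₁, hu₂⟩ : ∃ u, max (y1 + y2 - (z1 + z2)) (m - y2) < u ∧
      u < min x2 (m - (x1 + x2 - (z1 + z2))) :=
    exists_between (max_lt (lt_min (by linarith) (by linarith))
      (lt_min (by linarith) (by linarith)))
  rw [max_lt_iff] at hu₁
  rw [lt_min_iff] at hu₂
  obtain ⟨s, hs₁, hs₂⟩ : ∃ s, max u (y1 + y2 - m) < s ∧
      s < min (z1 + z2 - (m - u)) (z1 + z2 + m - (x1 + x2)) :=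
    exists_between (max_lt (lt_min (by linarith) (by linarith))
      (lt_min (by linarith) (by linarith)))
  rw [max_lt_iff] at hs₁
  rw [lt_min_iff] at hs₂
  obtain ⟨s₁, ⟨hs₁, hsz₁⟩, s₂, ⟨hs₂, hsz₂⟩, rfl⟩ :=
    exists_mem_Icc_add_eq (a := z1) (b := z2) (s := s) (by linarith) (by linarith) (by linarith)
      (by linarith)
  have hsum : (⟨0, u, y1, y2 - (m - u), s₁, s₂⟩ + ⟨x1, x2 - u, 0, m - u, z1 - s₁, z2 - s₂⟩ :
      Profile) = ⟨x1, x2, y1, y2, z1, z2⟩ := by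
    ext <;> simp [x1_add, x2_add, y1_add, y2_add, z1_add, z2_add]
  rw [← hsum] at hC ⊢
  refine paradox_of_runoffWin (L₁ := .A) (U₁ := .B) (L₂ := .B) (U₂ := .A) hC ?_ ?_ ?_ ?_ <;>
    simp only [nonneg, RunoffWin, fp, X, Y, Z, count] <;> grind

end Profile

end Characterisation

section DeficitCoordinates

open Profile

variable {d : Fin 5 → ℝ}

/-- The profile with total 1 given by `d = (a, b, w, y1, x1)`, where `A` and `B` have `1/2 - a` and
`1/2 - b` first places and `A` has `1/2 - w` votes in the runoff against `B`. -/
noncomputable def ofDeficits (d : Fin 5 → ℝ) : Profile :=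
  ⟨d 4, 1 / 2 - d 0 - d 4, d 3, 1 / 2 - d 1 - d 3, d 0 - d 2, d 1 + d 2⟩

theorem runoffWin_ofDeficits : (ofDeficits d).RunoffWin .C .A .B ↔
    d 0 + 2 * d 1 < 1 / 2 ∧ 2 * d 0 + d 1 < 1 / 2 ∧ 0 < d 2 := by
  simp only [RunoffWin, fp, count, X, Y, Z, ofDeficits]
  grind

/-- The point `d = (a, b, w, y1, x1)` lies on none of the hyperplanes that bound the regions of
paradoxical profiles. -/
structure Generic (d : Fin 5 → ℝ) : Prop where
  a_ne_b : d 0 ≠ d 1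
  a_ne_w : d 0 ≠ d 2
  w_ne_b : d 2 ≠ d 1
  w_ne_y1 : d 2 ≠ d 3
  y1_ne_zero : d 3 ≠ 0
  x1_ne_zero : d 4 ≠ 0
  a_add_x1_ne : d 0 + d 4 ≠ 1 / 2
  b_add_y1_ne : d 1 + d 3 ≠ 1 / 2
  a_add_b_ne : d 0 + d 1 ≠ 1 / 4
  x1_ne_two_b : d 4 ≠ 2 * d 1
  y1_ne_two_a : d 3 ≠ 2 * d 0
  y1_add_x1_ne : d 3 + d 4 ≠ 1 / 2
  y1_add_two_b_ne : d 3 + 2 * d 1 ≠ 1 / 2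

theorem ae_generic : ∀ᵐ d : Fin 5 → ℝ, Generic d := by
  have h (a : Fin 5 → ℝ) (ha : ∃ i, a i ≠ 0) (c : ℝ) :
      ∀ᵐ d : Fin 5 → ℝ, a 0 * d 0 + a 1 * d 1 + a 2 * d 2 + a 3 * d 3 + a 4 * d 4 ≠ c := by
    simpa only [dotProduct, Fin.sum_univ_five] using ae_dotProduct_ne (Function.ne_iff.mpr ha) c
  filter_upwards [
    h ![1, -1, 0, 0, 0] ⟨0, by simp⟩ 0, h ![1, 0, -1, 0, 0] ⟨0, by simp⟩ 0,
    h ![0, -1, 1, 0, 0] ⟨1, by simp⟩ 0, h ![0, 0, 1, -1, 0] ⟨2, by simp⟩ 0,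
    h ![0, 0, 0, 1, 0] ⟨3, by simp⟩ 0, h ![0, 0, 0, 0, 1] ⟨4, by simp⟩ 0,
    h ![1, 0, 0, 0, 1] ⟨0, by simp⟩ (1 / 2), h ![0, 1, 0, 1, 0] ⟨1, by simp⟩ (1 / 2),
    h ![1, 1, 0, 0, 0] ⟨0, by simp⟩ (1 / 4), h ![0, -2, 0, 0, 1] ⟨1, by simp⟩ 0,
    h ![-2, 0, 0, 1, 0] ⟨0, by simp⟩ 0, h ![0, 0, 0, 1, 1] ⟨3, by simp⟩ (1 / 2),
    h ![0, 2, 0, 1, 0] ⟨1, by simp⟩ (1 / 2)]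
    with d h₁ h₂ h₃ h₄ h₅ h₆ h₇ h₈ h₉ h₁₀ h₁₁ h₁₂ h₁₃
  refine ⟨?_, ?_, ?_, ?_, ?_, ?_, ?_, ?_, ?_, ?_, ?_, ?_, ?_⟩ <;> intro heq
  exacts [h₁ (by simp; linarith), h₂ (by simp; linarith), h₃ (by simp; linarith),
    h₄ (by simp; linarith), h₅ (by simp; linarith), h₆ (by simp; linarith),
    h₇ (by simp; linarith), h₈ (by simp; linarith), h₉ (by simp; linarith),
    h₁₀ (by simp; linarith), h₁₁ (by simp; linarith), h₁₂ (by simp; linarith),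
    h₁₃ (by simp; linarith)]

theorem paradox_A_ofDeficits (hd : Generic d) (hpos : (ofDeficits d).nonneg)
    (h : (ofDeficits d).RunoffWin .C .A .B) :
    paradox .A (ofDeficits d) ↔ d 2 < d 1 ∧ d 2 < d 3 := by
  constructor
  · intro hA
    obtain ⟨h₁, h₂⟩ := le_of_paradox_A h hA
    simp only [X, Y, ofDeficits] at h₁ h₂
    exact ⟨lt_of_le_of_ne (by linarith) hd.w_ne_b, lt_of_le_of_ne (by linarith) hd.w_ne_y1⟩
  · rintro ⟨h₁, h₂⟩
    apply paradox_A_of_lt hpos h <;> simp only [ofDeficits, X, Y] <;> linarith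

theorem paradox_C_ofDeficits (hd : Generic d) (hpos : (ofDeficits d).nonneg)
    (h : (ofDeficits d).RunoffWin .C .A .B) :
    paradox .C (ofDeficits d) ↔
      1 / 4 < d 0 + d 1 ∧ d 4 < 2 * d 1 ∧ d 3 < 2 * d 0 ∧ d 3 + d 4 < 1 / 2 := by
  constructor
  · intro hC
    obtain ⟨h₁, h₂, h₃, h₄⟩ := le_of_paradox_C h hC
    simp only [X, Y, Z, ofDeficits] at h₁ h₂ h₃ h₄
    exact ⟨lt_of_le_of_ne (by linarith) hd.a_add_b_ne.symm,
      lt_of_le_of_ne (by linarith) hd.x1_ne_two_b, lt_of_le_of_ne (by linarith) hd.y1_ne_two_a,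
      lt_of_le_of_ne (by linarith) hd.y1_add_x1_ne⟩
  · rintro ⟨h₁, h₂, h₃, h₄⟩
    apply paradox_C_of_lt hpos h <;> simp only [ofDeficits, X, Y, Z] <;> linarith

theorem exists_paradox_ofDeficits (hd : Generic d) (h : (ofDeficits d).RunoffWin .C .A .B) :
    (∃ W, paradox W (ofDeficits d)) ↔ (ofDeficits d).nonneg ∧ (d 2 < d 1 ∧ d 2 < d 3 ∨
      1 / 4 < d 0 + d 1 ∧ d 4 < 2 * d 1 ∧ d 3 < 2 * d 0 ∧ d 3 + d 4 < 1 / 2) := by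
  by_cases hpos : (ofDeficits d).nonneg
  · have hB : ¬ paradox .B (ofDeficits d) := fun ⟨_, _, _, _, _, _, _, hB⟩ ↦
      hB ((h.wins_iff_eq hpos).mpr rfl)
    rw [exists_cand, paradox_A_ofDeficits hd hpos h, paradox_C_ofDeficits hd hpos h]
    simp only [hB, hpos, false_or, true_and]
  · exact iff_of_false (fun ⟨_, hW⟩ ↦ hpos hW.nonneg) fun hW ↦ hpos hW.1

/-- The matrix taking `(a, b)` to the first two coordinates used for the `i`-th cell: the deficits
themselves, or the third candidate's share `Z = a + b` and one of the deficits. -/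
def frame : Fin 6 → Matrix (Fin 2) (Fin 2) ℝ :=
  ![1, !![0, 1; 1, 0], !![1, 1; 1, 0], !![1, 1; 0, 1], !![1, 1; 0, 1], !![1, 1; 0, 1]]

theorem abs_det_frame (i : Fin 6) : |(frame i).det| = 1 := by
  fin_cases i <;> simp [frame, Matrix.det_fin_two]

/-- The action of `N` on the first two coordinates of `d`. -/
def shear (N : Matrix (Fin 2) (Fin 2) ℝ) (d : Fin 5 → ℝ) : Fin 5 → ℝ :=
  ![N 0 0 * d 0 + N 0 1 * d 1, N 1 0 * d 0 + N 1 1 * d 1, d 2, d 3, d 4]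

theorem measurePreserving_shear {N : Matrix (Fin 2) (Fin 2) ℝ} (hN : |N.det| = 1) :
    MeasurePreserving (shear N) := by
  have h : shear N = fun d ↦ !![N 0 0, N 0 1, 0, 0, 0; N 1 0, N 1 1, 0, 0, 0; 0, 0, 1, 0, 0;
      0, 0, 0, 1, 0; 0, 0, 0, 0, 1] *ᵥ d + 0 := by
    ext d i
    fin_cases i <;> simp [shear, dotProduct, Fin.sum_univ_succ]
  rw [h]
  refine measurePreserving_mulVec_add (Eq.trans ?_ hN) 0
  simp [Matrix.det_succ_row_zero, Fin.sum_univ_succ, Fin.succAbove]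

/-- The deficits of the paradoxical profiles in which `B` wins the runoff after `C` is eliminated,
up to a null set, cut into six pieces. The paradox is for `A` in regions `0` (`a < b`) and `1`
(`b < a`), and for `C` alone in `2` (`a < b`), `3` (`b < a`), `4` (`y1 < 1/2 - 2b`) and
`5` (`1/2 - 2b < y1`), where `w < b` in `2` and `3`, and `b < w` in `4` and `5`. -/
def region (i : Fin 6) : Set (Fin 5 → ℝ) := shear (frame i) ⁻¹' cell i

theorem mem_region_zero : d ∈ region 0 ↔
    0 < d 0 ∧ d 0 < 1 / 6 ∧ d 0 < d 1 ∧ d 1 < 1 / 4 - d 0 / 2 ∧ 0 < d 2 ∧ d 2 < d 0 ∧ d 2 < d 3 ∧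
      d 3 < 1 / 2 - d 1 ∧ 0 < d 4 ∧ d 4 < 1 / 2 - d 0 := by
  simp [region, frame, shear, cell, nest, Matrix.vecHead, Matrix.vecTail, and_assoc]

theorem mem_region_one : d ∈ region 1 ↔
    0 < d 1 ∧ d 1 < 1 / 6 ∧ d 1 < d 0 ∧ d 0 < 1 / 4 - d 1 / 2 ∧ 0 < d 2 ∧ d 2 < d 1 ∧ d 2 < d 3 ∧
      d 3 < 1 / 2 - d 1 ∧ 0 < d 4 ∧ d 4 < 1 / 2 - d 0 := by
  simp [region, frame, shear, cell, nest, Matrix.vecHead, Matrix.vecTail, and_assoc]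

theorem mem_region_two : d ∈ region 2 ↔
    1 / 4 < d 0 + d 1 ∧ d 0 + d 1 < 1 / 3 ∧ 2 * (d 0 + d 1) - 1 / 2 < d 0 ∧ d 0 < (d 0 + d 1) / 2 ∧
      0 < d 2 ∧ d 2 < d 0 ∧ 0 < d 3 ∧ d 3 < d 2 ∧ 0 < d 4 ∧ d 4 < 2 * d 1 := by
  simp [region, frame, shear, cell, nest, Matrix.vecHead, Matrix.vecTail, and_assoc]

theorem mem_region_three : d ∈ region 3 ↔
    1 / 4 < d 0 + d 1 ∧ d 0 + d 1 < 1 / 3 ∧ 2 * (d 0 + d 1) - 1 / 2 < d 1 ∧ d 1 < (d 0 + d 1) / 2 ∧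
      0 < d 2 ∧ d 2 < d 1 ∧ 0 < d 3 ∧ d 3 < d 2 ∧ 0 < d 4 ∧ d 4 < 2 * d 1 := by
  simp [region, frame, shear, cell, nest, Matrix.vecHead, Matrix.vecTail, and_assoc]

theorem mem_region_four : d ∈ region 4 ↔
    1 / 4 < d 0 + d 1 ∧ d 0 + d 1 < 1 / 3 ∧ 2 * (d 0 + d 1) - 1 / 2 < d 1 ∧ d 1 < (d 0 + d 1) / 2 ∧
      d 1 < d 2 ∧ d 2 < d 0 ∧ 0 < d 3 ∧ d 3 < 1 / 2 - 2 * d 1 ∧ 0 < d 4 ∧ d 4 < 2 * d 1 := by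
  simp [region, frame, shear, cell, nest, Matrix.vecHead, Matrix.vecTail, and_assoc]

theorem mem_region_five : d ∈ region 5 ↔
    1 / 4 < d 0 + d 1 ∧ d 0 + d 1 < 1 / 3 ∧ 2 * (d 0 + d 1) - 1 / 2 < d 1 ∧ d 1 < (d 0 + d 1) / 2 ∧
      d 1 < d 2 ∧ d 2 < d 0 ∧ 1 / 2 - 2 * d 1 < d 3 ∧ d 3 < 2 * d 0 ∧ 0 < d 4 ∧
      d 4 < 1 / 2 - d 3 := by
  simp [region, frame, shear, cell, nest, Matrix.vecHead, Matrix.vecTail, and_assoc]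

theorem measurableSet_region (i : Fin 6) : MeasurableSet (region i) :=
  (measurePreserving_shear (abs_det_frame i)).measurable (measurableSet_cell i)

theorem volume_region (i : Fin 6) : volume (region i) = ENNReal.ofReal (cellVolume i) := by
  rw [region, (measurePreserving_shear (abs_det_frame i)).measure_preimage
    (measurableSet_cell i).nullMeasurableSet]
  exact (hasVolume_cell i).2 (measurableSet_cell i)

theorem pairwise_disjoint_region : Pairwise (Function.onFun Disjoint region) := by
  refine (pairwise_disjoint_on _).mpr fun i j hij ↦ disjoint_left.mpr fun d hi hj ↦ ?_
  fin_cases i <;> fin_cases j <;> first | exact absurd hij (by decide) | skip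
  all_goals
    simp only [Fin.zero_eta, Fin.mk_one, Fin.reduceFinMk, mem_region_zero, mem_region_one,
      mem_region_two, mem_region_three, mem_region_four, mem_region_five] at hi hj
    obtain ⟨_, _, _, _, _, _, _, _, _, _⟩ := hi
    obtain ⟨_, _, _, _, _, _, _, _, _, _⟩ := hj
    linarith

theorem runoffWin_and_paradox_of_mem_region {i : Fin 6} (h : d ∈ region i) :
    (ofDeficits d).RunoffWin .C .A .B ∧ (ofDeficits d).nonneg ∧ (d 2 < d 1 ∧ d 2 < d 3 ∨
      1 / 4 < d 0 + d 1 ∧ d 4 < 2 * d 1 ∧ d 3 < 2 * d 0 ∧ d 3 + d 4 < 1 / 2) := by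
  rw [runoffWin_ofDeficits]
  simp only [ofDeficits, nonneg]
  fin_cases i <;>
    simp only [Fin.zero_eta, Fin.mk_one, Fin.reduceFinMk, mem_region_zero, mem_region_one,
      mem_region_two, mem_region_three, mem_region_four, mem_region_five] at h <;>
    obtain ⟨_, _, _, _, _, _, _, _, _, _⟩ := h <;>
    refine ⟨⟨?_, ?_, ?_⟩, ⟨?_, ?_, ?_, ?_, ?_, ?_⟩, ?_⟩ <;>
    first
    | linarith
    | exact .inl ⟨by linarith, by linarith⟩
    | exact .inr ⟨by linarith, by linarith, by linarith, by linarith⟩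

theorem exists_mem_region (hd : Generic d) (h : (ofDeficits d).RunoffWin .C .A .B)
    (hpos : (ofDeficits d).nonneg) (hAC : d 2 < d 1 ∧ d 2 < d 3 ∨
      1 / 4 < d 0 + d 1 ∧ d 4 < 2 * d 1 ∧ d 3 < 2 * d 0 ∧ d 3 + d 4 < 1 / 2) :
    ∃ i, d ∈ region i := by
  obtain ⟨h₁, h₂, hw⟩ := runoffWin_ofDeficits.mp h
  obtain ⟨hx1, hx2, hy1, hy2, hz1, hz2⟩ := hpos
  simp only [ofDeficits] at hx1 hx2 hy1 hy2 hz1 hz2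
  replace hx1 : 0 < d 4 := lt_of_le_of_ne hx1 hd.x1_ne_zero.symm
  replace hx2 : d 0 + d 4 < 1 / 2 := lt_of_le_of_ne (by linarith) hd.a_add_x1_ne
  replace hy1 : 0 < d 3 := lt_of_le_of_ne hy1 hd.y1_ne_zero.symm
  replace hy2 : d 1 + d 3 < 1 / 2 := lt_of_le_of_ne (by linarith) hd.b_add_y1_ne
  replace hz1 : d 2 < d 0 := lt_of_le_of_ne (by linarith) hd.a_ne_w.symm
  by_cases hA : d 2 < d 1 ∧ d 2 < d 3
  · obtain ⟨hwb, hwy⟩ := hA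
    rcases hd.a_ne_b.lt_or_gt with hab | hab
    · exact ⟨0, mem_region_zero.mpr <| by split_ands <;> linarith⟩
    · exact ⟨1, mem_region_one.mpr <| by split_ands <;> linarith⟩
  obtain ⟨hZ, hxb, hya, hyx⟩ := hAC.resolve_left hA
  rcases hd.w_ne_b.lt_or_gt with hwb | hwb
  · have hwy : d 3 < d 2 := lt_of_le_of_ne (not_lt.mp fun h ↦ hA ⟨hwb, h⟩) hd.w_ne_y1.symm
    rcases hd.a_ne_b.lt_or_gt with hab | hab
    · exact ⟨2, mem_region_two.mpr <| by split_ands <;> linarith⟩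
    · exact ⟨3, mem_region_three.mpr <| by split_ands <;> linarith⟩
  · rcases hd.y1_add_two_b_ne.lt_or_gt with hyb | hyb
    · exact ⟨4, mem_region_four.mpr <| by split_ands <;> linarith⟩
    · exact ⟨5, mem_region_five.mpr <| by split_ands <;> linarith⟩

theorem mem_iUnion_region (hd : Generic d) :
    d ∈ ⋃ i, region i ↔ (ofDeficits d).RunoffWin .C .A .B ∧ ∃ W, paradox W (ofDeficits d) := by
  rw [and_congr_right (exists_paradox_ofDeficits hd), mem_iUnion]
  exact ⟨fun ⟨_, h⟩ ↦ runoffWin_and_paradox_of_mem_region h,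
    fun ⟨h, hpos, hAC⟩ ↦ exists_mem_region hd h hpos hAC⟩

end DeficitCoordinates

section FundamentalRegion

/-- The deficits `(a, b, w, y1, x1)` of the profile with coordinates `v`. -/
noncomputable def deficits (v : Fin 5 → ℝ) : Fin 5 → ℝ :=
  ![1 / 2 - v 0 - v 1, 1 / 2 - v 2 - v 3, 1 / 2 - v 0 - v 1 - v 4, v 2, v 0]

theorem ofDeficits_deficits (v : Fin 5 → ℝ) : ofDeficits (deficits v) = profOf v := by
  ext <;> simp [ofDeficits, deficits, profOf] <;> ring

theorem measurePreserving_deficits : MeasurePreserving deficits := by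
  have h : deficits = fun v ↦ !![-1, -1, 0, 0, 0; 0, 0, -1, -1, 0; -1, -1, 0, 0, -1;
      0, 0, 1, 0, 0; 1, 0, 0, 0, 0] *ᵥ v + ![1 / 2, 1 / 2, 1 / 2, 0, 0] := by
    ext v i
    fin_cases i <;> simp [deficits, dotProduct, Fin.sum_univ_succ] <;> ring
  rw [h]
  refine measurePreserving_mulVec_add ?_ _
  simp [Matrix.det_succ_row_zero, Fin.sum_univ_succ, Fin.succAbove]

/-- The points of the simplex at which some candidate demonstrates a reinforcement paradox. -/
def paradoxSet : Set (Fin 5 → ℝ) := {v | ∃ W : Cand, paradox W (profOf v)}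

/-- The points whose profile has `C` eliminated first and `B` then beating `A`. -/
def runoffSet : Set (Fin 5 → ℝ) := {v | (profOf v).RunoffWin .C .A .B}

theorem deficits_preimage_iUnion_region :
    deficits ⁻¹' (⋃ i, region i) =ᵐ[volume] (paradoxSet ∩ runoffSet : Set (Fin 5 → ℝ)) := by
  filter_upwards [measurePreserving_deficits.quasiMeasurePreserving.ae ae_generic] with v hv
  exact propext <| (mem_iUnion_region hv).trans <| by
    rw [ofDeficits_deficits, and_comm]
    rfl

theorem measurableSet_iUnion_region : MeasurableSet (⋃ i, region i) :=
  MeasurableSet.iUnion measurableSet_region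

theorem nullMeasurableSet_paradoxSet_inter_runoffSet :
    NullMeasurableSet (paradoxSet ∩ runoffSet) :=
  (measurePreserving_deficits.measurable measurableSet_iUnion_region).nullMeasurableSet.congr
    deficits_preimage_iUnion_region

theorem volume_paradoxSet_inter_runoffSet :
    volume (paradoxSet ∩ runoffSet) = ENNReal.ofReal (191 / 552960) := by
  rw [← measure_congr deficits_preimage_iUnion_region, measurePreserving_deficits.measure_preimage
    measurableSet_iUnion_region.nullMeasurableSet, measure_iUnion pairwise_disjoint_region
    measurableSet_region, tsum_fintype]
  simp only [volume_region]
  rw [← ENNReal.ofReal_sum_of_nonneg fun i _ ↦ (hasVolume_cell i).1, sum_cellVolume]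

end FundamentalRegion

section Symmetry

open Profile

/-- The coordinates of a profile of total 1, inverse to `profOf`. -/
def coords (p : Profile) : Fin 5 → ℝ := ![p.x1, p.x2, p.y1, p.y2, p.z1]

theorem V_profOf (v : Fin 5 → ℝ) : (profOf v).V = 1 := by
  simp only [profOf, V, X, Y, Z]
  ring

theorem coords_profOf (v : Fin 5 → ℝ) : coords (profOf v) = v := by
  ext i
  fin_cases i <;> rfl

theorem profOf_coords {p : Profile} (hp : p.V = 1) : profOf (coords p) = p := by
  simp only [V, X, Y, Z] at hp
  ext <;> simp [profOf, coords]
  linarith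

/-- The action of a permutation of the candidates on the coordinates of profiles of total 1. -/
noncomputable def relabelCoords (σ : Equiv.Perm Cand) (v : Fin 5 → ℝ) : Fin 5 → ℝ :=
  coords ((profOf v).relabel σ)

theorem profOf_relabelCoords (σ : Equiv.Perm Cand) (v : Fin 5 → ℝ) :
    profOf (relabelCoords σ v) = (profOf v).relabel σ :=
  profOf_coords <| (V_relabel σ _).trans (V_profOf v)

theorem iterate_relabelCoords (σ : Equiv.Perm Cand) (k : ℕ) :
    (relabelCoords σ)^[k] = relabelCoords (σ ^ k) := by
  induction k with
  | zero => exact funext fun v ↦ by simp [relabelCoords, relabel_one, coords_profOf]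
  | succ k ih =>
    refine funext fun v ↦ ?_
    rw [Function.iterate_succ_apply', ih, relabelCoords, profOf_relabelCoords, relabel_relabel,
      ← pow_succ, relabelCoords]

theorem exists_count_profOf_eq (a b : Cand) :
    ∃ (r : Fin 5 → ℝ) (c : ℝ), ∀ v, (profOf v).count a b = r ⬝ᵥ v + c := by
  cases a <;> cases b
  case A.A | B.B | C.C => exact ⟨0, 0, fun v ↦ by simp [count]⟩
  case A.B => exact ⟨Pi.single 0 1, 0, fun v ↦ by simp [count, profOf]⟩
  case A.C => exact ⟨Pi.single 1 1, 0, fun v ↦ by simp [count, profOf]⟩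
  case B.A => exact ⟨Pi.single 2 1, 0, fun v ↦ by simp [count, profOf]⟩
  case B.C => exact ⟨Pi.single 3 1, 0, fun v ↦ by simp [count, profOf]⟩
  case C.A => exact ⟨Pi.single 4 1, 0, fun v ↦ by simp [count, profOf]⟩
  case C.B =>
    refine ⟨-1, 1, fun v ↦ ?_⟩
    simp only [count, profOf, neg_dotProduct, one_dotProduct, Fin.sum_univ_five]
    ring

theorem measurePreserving_relabelCoords (σ : Equiv.Perm Cand) :
    MeasurePreserving (relabelCoords σ) := by
  have haff (i : Fin 5) : ∃ (r : Fin 5 → ℝ) (c : ℝ), ∀ v, relabelCoords σ v i = r ⬝ᵥ v + c := by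
    fin_cases i <;> exact exists_count_profOf_eq _ _
  choose M t h using haff
  have hσ : relabelCoords σ = fun v ↦ Matrix.of M *ᵥ v + t := funext fun v ↦ funext fun i ↦ h i v
  have hid : (relabelCoords σ)^[Fintype.card (Equiv.Perm Cand)] = id := by
    rw [iterate_relabelCoords, pow_card_eq_one, ← pow_zero σ, ← iterate_relabelCoords,
      Function.iterate_zero]
  rw [hσ] at hid ⊢
  exact measurePreserving_mulVec_add_of_iterate_eq_id Fintype.card_ne_zero hid

theorem ae_exists_runoffWin : ∀ᵐ v, ∃ L U W, (profOf v).RunoffWin L U W := by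
  have h (a : Fin 5 → ℝ) (ha : a 0 ≠ 0) (c : ℝ) :
      ∀ᵐ v : Fin 5 → ℝ, a 0 * v 0 + a 1 * v 1 + a 2 * v 2 + a 3 * v 3 + a 4 * v 4 ≠ c := by
    simpa only [dotProduct, Fin.sum_univ_five] using
      ae_dotProduct_ne (Function.ne_iff.mpr ⟨0, ha⟩) c
  filter_upwards [h ![1, 1, -1, -1, 0] (by simp) 0, h ![2, 2, 1, 1, 0] (by simp) 1,
    h ![1, 1, 2, 2, 0] (by simp) 1, h ![2, 0, 2, 2, 0] (by simp) 1,
    h ![2, 2, 2, 0, 0] (by simp) 1, h ![2, 2, 0, 0, 2] (by simp) 1] with v hAB hAC hBC hA hB hC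
  apply exists_runoffWin <;> simp only [fp, X, Y, Z, profOf, count] <;> intro heq
  exacts [hAB (by simp; linarith), hAC (by simp; linarith), hBC (by simp; linarith),
    hA (by simp; linarith), hB (by simp; linarith), hC (by simp; linarith)]

theorem ae_exists_relabelCoords_mem_runoffSet :
    ∀ᵐ v, ∃ σ : Equiv.Perm Cand, relabelCoords σ v ∈ runoffSet := by
  filter_upwards [ae_exists_runoffWin] with v ⟨L, U, W, h⟩
  obtain ⟨σ, hσ⟩ := h.exists_relabel
  exact ⟨σ, by rwa [runoffSet, mem_ofPred_eq, profOf_relabelCoords]⟩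

theorem relabelCoords_mem_paradoxSet {σ : Equiv.Perm Cand} {v : Fin 5 → ℝ} :
    relabelCoords σ v ∈ paradoxSet ↔ v ∈ paradoxSet := by
  rw [paradoxSet, mem_ofPred_eq, profOf_relabelCoords]
  exact exists_paradox_relabel σ

theorem paradoxSet_ae_eq_iUnion : (paradoxSet : Set (Fin 5 → ℝ)) =ᵐ[volume]
    ⋃ σ, relabelCoords σ ⁻¹' (paradoxSet ∩ runoffSet) := by
  filter_upwards [ae_exists_relabelCoords_mem_runoffSet] with v hv
  refine propext <| Iff.symm <| mem_iUnion.trans ?_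
  simp only [mem_preimage, mem_inter_iff, relabelCoords_mem_paradoxSet, exists_and_left, hv,
    and_true]
  rfl

theorem disjoint_preimage_relabelCoords : Pairwise (Function.onFun Disjoint fun σ ↦
    relabelCoords σ ⁻¹' (paradoxSet ∩ runoffSet)) := by
  refine fun σ τ hστ ↦ disjoint_left.mpr fun v ⟨_, hσ⟩ ⟨_, hτ⟩ ↦ hστ ?_
  rw [runoffSet, mem_ofPred_eq, profOf_relabelCoords] at hσ hτ
  exact hσ.relabel_injective hτ

theorem volume_paradoxSet :
    volume paradoxSet = 6 * volume (paradoxSet ∩ runoffSet) := by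
  have hnull := nullMeasurableSet_paradoxSet_inter_runoffSet
  rw [measure_congr paradoxSet_ae_eq_iUnion,
    measure_iUnion₀ (disjoint_preimage_relabelCoords.mono fun _ _ ↦ Disjoint.aedisjoint)
      fun σ ↦ hnull.preimage (measurePreserving_relabelCoords σ).quasiMeasurePreserving,
    tsum_fintype]
  simp only [(measurePreserving_relabelCoords _).measure_preimage hnull, Finset.sum_const,
    Finset.card_univ, Fintype.card_perm, nsmul_eq_mul]
  rfl

theorem mem_T_of_nonneg {v : Fin 5 → ℝ} (h : (profOf v).nonneg) : v ∈ T := by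
  obtain ⟨h₀, h₁, h₂, h₃, h₄, h₅⟩ := h
  refine ⟨fun i ↦ ?_, sub_nonneg.mp h₅⟩
  fin_cases i <;> assumption

end Symmetry

theorem stmt15 :
    MeasureTheory.volume
      {v ∈ T | ∃ W : Cand, paradox W (profOf v)} =
      (191 / 768) * (1 / 120 : ENNReal) := by
  have hT : {v ∈ T | ∃ W : Cand, paradox W (profOf v)} = paradoxSet :=
    inter_eq_right.mpr fun _ ⟨_, hW⟩ ↦ mem_T_of_nonneg hW.nonneg
  rw [hT, volume_paradoxSet, volume_paradoxSet_inter_runoffSet,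
    ← ENNReal.ofReal_ofNat 6]
  have h : (191 / 768) * (1 / 120 : ENNReal) = ENNReal.ofReal ((191 / 768) * (1 / 120)) := by
    rw [ENNReal.ofReal_mul (by norm_num), ENNReal.ofReal_div_of_pos (by norm_num),
      ENNReal.ofReal_div_of_pos (by norm_num)]
    norm_num
  rw [h, ← ENNReal.ofReal_mul (by norm_num)]
  norm_num
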